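/- arXiv:1510.08740 — 2 statements merged into one kernel-verified Lean document; each statement's English description precedes it below -/
import Mathlib

section
/- Let H be a real Hilbert space, Ψ : H → ℝ ∪ {+∞} proper, lower-semicontinuous and convex, and Φ : H → ℝ convex and continuously differentiable with L-Lipschitz continuous gradient. Suppose x* ∈ argmin(Ψ + Φ), and let (x_k) be generated by the accelerated forward-backward algorithm with parameter α ≥ 3 and step size 0 < s < 1/L. Then the energy sequence E(k) = (2s/(α−1))(k+α−2)²(Θ(x_k) − Θ(x*)) + (α−1)‖z_k − x*‖² is nonincreasing in k, and lim_{k→∞} E(k) exists. -/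
open Filter RealInnerProductSpace

lemma descent_aux {H : Type*} [NormedAddCommGroup H] [InnerProductSpace ℝ H] [CompleteSpace H]
    (Φ : H → ℝ) (Φ' : H → H) (L : ℝ) (hL : 0 < L)
    (hΦ_diff : ∀ u, HasGradientAt Φ (Φ' u) u)
    (hΦ_lip : LipschitzWith (Real.toNNReal L) Φ') (y p : H) :
    Φ p ≤ Φ y + ⟪Φ' y, p - y⟫ + L / 2 * ‖p - y‖ ^ 2 := by
  have hline : ∀ t : ℝ, HasDerivAt (fun t : ℝ => y + t • (p - y)) (p - y) t := by
    intro t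
    simpa using ((hasDerivAt_id t).smul_const (p - y)).const_add y
  have hd : ∀ t : ℝ, HasDerivAt (fun t : ℝ => Φ (y + t • (p - y)) - t * ⟪Φ' y, p - y⟫
      - L / 2 * ‖p - y‖ ^ 2 * t ^ 2)
      (⟪Φ' (y + t • (p - y)), p - y⟫ - ⟪Φ' y, p - y⟫ - L / 2 * ‖p - y‖ ^ 2 * (2 * t)) t := by
    intro t
    have h1 := (hΦ_diff (y + t • (p - y))).hasFDerivAt.comp_hasDerivAt t (hline t)
    have h2 := (hasDerivAt_id t).mul_const (⟪Φ' y, p - y⟫)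
    have h3 := ((hasDerivAt_id t).pow 2).const_mul (L / 2 * ‖p - y‖ ^ 2)
    have h4 := (h1.sub h2).sub h3
    refine h4.congr_deriv ?_
    simp
  have hanti : AntitoneOn (fun t : ℝ => Φ (y + t • (p - y)) - t * ⟪Φ' y, p - y⟫
      - L / 2 * ‖p - y‖ ^ 2 * t ^ 2) (Set.Ici 0) := by
    apply antitoneOn_of_deriv_nonpos (convex_Ici 0)
    · exact fun t _ => (hd t).continuousAt.continuousWithinAt
    · exact fun t _ => (hd t).differentiableAt.differentiableWithinAt
    · intro t ht
      rw [interior_Ici] at ht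
      have ht : 0 < t := ht
      rw [(hd t).deriv, ← inner_sub_left]
      have h1 := real_inner_le_norm (Φ' (y + t • (p - y)) - Φ' y) (p - y)
      have h2 := hΦ_lip.norm_sub_le (y + t • (p - y)) y
      rw [Real.coe_toNNReal _ hL.le, add_sub_cancel_left, norm_smul, Real.norm_of_nonneg ht.le] at h2
      have h3 := mul_le_mul_of_nonneg_right h2 (norm_nonneg (p - y))
      nlinarith
  have := hanti (Set.mem_Ici.2 le_rfl) (Set.mem_Ici.2 zero_le_one) zero_le_one
  simp at this
  linarith

lemma convex_aux {H : Type*} [NormedAddCommGroup H] [InnerProductSpace ℝ H] [CompleteSpace H]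
    (Φ : H → ℝ) (Φ' : H → H) (hΦ_convex : ConvexOn ℝ Set.univ Φ)
    (hΦ_diff : ∀ u, HasGradientAt Φ (Φ' u) u) (y u : H) :
    Φ y + ⟪Φ' y, u - y⟫ ≤ Φ u := by
  have hline : HasDerivAt (fun t : ℝ => y + t • (u - y)) (u - y) 0 := by
    simpa using ((hasDerivAt_id (0 : ℝ)).smul_const (u - y)).const_add y
  have hg : HasGradientAt Φ (Φ' y) (y + (0 : ℝ) • (u - y)) := by simpa using hΦ_diff y
  have h1 : HasDerivAt (fun t : ℝ => Φ (y + t • (u - y))) ⟪Φ' y, u - y⟫ 0 := by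
    refine (hg.hasFDerivAt.comp_hasDerivAt 0 hline).congr_deriv ?_
    simp
  have hc : ConvexOn ℝ Set.univ (fun t : ℝ => Φ (y + t • (u - y))) := by
    refine ⟨convex_univ, ?_⟩
    intro a _ b _ p q hp hq hpq
    have := hΦ_convex.2 (Set.mem_univ (y + a • (u - y))) (Set.mem_univ (y + b • (u - y))) hp hq hpq
    refine le_trans (le_of_eq ?_) this
    obtain rfl : p = 1 - q := by linarith
    have e : y + ((1 - q) • a + q • b) • (u - y)
        = (1 - q) • (y + a • (u - y)) + q • (y + b • (u - y)) := by
      simp only [smul_eq_mul]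
      module
    exact congrArg Φ e
  have := hc.le_slope_of_hasDerivAt (Set.mem_univ 0) (Set.mem_univ 1) one_pos h1
  simp [slope_def_field] at this
  linarith

lemma comb_norm_sq {H : Type*} [NormedAddCommGroup H] [InnerProductSpace ℝ H] (a b : ℝ)
    (hab : a + b = 1) (p q w : H) :
    ‖a • p + b • q - w‖ ^ 2 = a * ‖p - w‖ ^ 2 + b * ‖q - w‖ ^ 2 - a * b * ‖q - p‖ ^ 2 := by
  obtain rfl : a = 1 - b := by linarith
  have e1 : (1 - b) • p + b • q - w = (1 - b) • (p - w) + b • (q - w) := by module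
  have e2 : q - p = (q - w) - (p - w) := by abel
  rw [e1, e2, norm_add_sq_real, norm_sub_sq_real (q - w) (p - w), norm_smul, norm_smul, mul_pow, mul_pow,
    real_inner_smul_left, real_inner_smul_right, Real.norm_eq_abs, Real.norm_eq_abs, sq_abs, sq_abs,
    real_inner_comm (q - w) (p - w)]
  ring

lemma prox_aux {H : Type*} [NormedAddCommGroup H] [InnerProductSpace ℝ H]
    (Ψ : H → EReal) (c : ℝ) (w p u : H) (A B : ℝ)
    (hΨ_convex : ∀ u v : H, ∀ a b : ℝ, 0 ≤ a → 0 ≤ b → a + b = 1 →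
      Ψ (a • u + b • v) ≤ (a : EReal) * Ψ u + (b : EReal) * Ψ v)
    (hp : ∀ u : H, Ψ p + ((c * ‖p - w‖ ^ 2 : ℝ) : EReal)
        ≤ Ψ u + ((c * ‖u - w‖ ^ 2 : ℝ) : EReal))
    (hA : Ψ p = A) (hB : Ψ u ≤ B) :
    A + c * ‖p - w‖ ^ 2 + c * ‖u - p‖ ^ 2 ≤ B + c * ‖u - w‖ ^ 2 := by
  have key : ∀ t : ℝ, 0 < t → t < 1 →
      A + c * ‖p - w‖ ^ 2 + (1 - t) * (c * ‖u - p‖ ^ 2) ≤ B + c * ‖u - w‖ ^ 2 := by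
    intro t h0 h1
    have e1 := hp ((1 - t) • p + t • u)
    have e2 := hΨ_convex p u (1 - t) t (by linarith) h0.le (by ring)
    have e3 : Ψ ((1 - t) • p + t • u) ≤ (((1 - t) * A + t * B : ℝ) : EReal) := by
      refine e2.trans ?_
      rw [hA, EReal.coe_add, EReal.coe_mul, EReal.coe_mul]
      gcongr
    have e4 := e1.trans (add_le_add_left e3 _)
    rw [hA, comb_norm_sq _ _ (by ring)] at e4
    have e5 : A + c * ‖p - w‖ ^ 2 ≤ ((1 - t) * A + t * B) + c * ((1 - t) * ‖p - w‖ ^ 2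
      + t * ‖u - w‖ ^ 2 - (1 - t) * t * ‖u - p‖ ^ 2) := by exact_mod_cast e4
    refine le_of_mul_le_mul_left ?_ h0
    linarith
  have hT : Tendsto (fun t : ℝ => A + c * ‖p - w‖ ^ 2 + (1 - t) * (c * ‖u - p‖ ^ 2))
      (nhdsWithin 0 (Set.Ioi 0)) (nhds (A + c * ‖p - w‖ ^ 2 + (1 - 0) * (c * ‖u - p‖ ^ 2))) := by
    apply tendsto_nhdsWithin_of_tendsto_nhds
    apply Continuous.tendsto
    fun_prop
  have := le_of_tendsto hT (b := B + c * ‖u - w‖ ^ 2) (by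
    filter_upwards [Ioo_mem_nhdsGT (zero_lt_one (α := ℝ))] with t ht
    exact key t ht.1 ht.2)
  linarith

lemma fb_aux {H : Type*} [NormedAddCommGroup H] [InnerProductSpace ℝ H] [CompleteSpace H]
    (Ψ : H → EReal) (Φ : H → ℝ) (Φ' : H → H) (L s : ℝ)
    (hΨ_convex : ∀ u v : H, ∀ a b : ℝ, 0 ≤ a → 0 ≤ b → a + b = 1 →
      Ψ (a • u + b • v) ≤ (a : EReal) * Ψ u + (b : EReal) * Ψ v)
    (hΦ_convex : ConvexOn ℝ Set.univ Φ)
    (hΦ_diff : ∀ u, HasGradientAt Φ (Φ' u) u)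
    (hΦ_lip : LipschitzWith (Real.toNNReal L) Φ')
    (hs : 0 < s) (hL : 0 < L) (hsL : s * L ≤ 1) (y p u : H) (A B : ℝ)
    (hp : ∀ u : H, Ψ p + ((1 / (2 * s) * ‖p - (y - s • Φ' y)‖ ^ 2 : ℝ) : EReal)
        ≤ Ψ u + ((1 / (2 * s) * ‖u - (y - s • Φ' y)‖ ^ 2 : ℝ) : EReal))
    (hA : Ψ p = A) (hB : Ψ u ≤ B) :
    2 * s * (A + Φ p) + ‖u - p‖ ^ 2 ≤ 2 * s * (B + Φ u) + ‖u - y‖ ^ 2 := by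
  have h1 := prox_aux Ψ _ _ p u A B hΨ_convex hp hA hB
  have h2 := descent_aux Φ Φ' L hL hΦ_diff hΦ_lip y p
  have h3 := convex_aux Φ Φ' hΦ_convex hΦ_diff y u
  have e : ∀ v : H, ‖v - (y - s • Φ' y)‖ ^ 2
      = ‖v - y‖ ^ 2 + 2 * s * ⟪Φ' y, v - y⟫ + s ^ 2 * ‖Φ' y‖ ^ 2 := by
    intro v
    have : v - (y - s • Φ' y) = (v - y) + s • Φ' y := by abel
    rw [this, norm_add_sq_real, norm_smul, real_inner_smul_right, real_inner_comm, mul_pow,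
      Real.norm_eq_abs, sq_abs]
    ring
  rw [e, e] at h1
  have h4 := mul_le_mul_of_nonneg_left h1 (by linarith : 0 ≤ 2 * s)
  have h5 : 2 * s * (1 / (2 * s)) = 1 := by field_simp
  simp only [mul_add, ← mul_assoc] at h4
  simp only [h5] at h4
  have h6 := mul_le_mul_of_nonneg_left h2 (by linarith : 0 ≤ 2 * s)
  have h7 := mul_le_mul_of_nonneg_left h3 (by linarith : 0 ≤ 2 * s)
  have h8 := mul_le_mul_of_nonneg_right hsL (sq_nonneg ‖p - y‖)
  nlinarith

/-- Fact 1: the energy sequence `E(k)` is nonincreasing and its limit exists. -/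
theorem fista_energy_nonincreasing
    {H : Type*} [NormedAddCommGroup H] [InnerProductSpace ℝ H] [CompleteSpace H]
    (Ψ : H → EReal) (Φ : H → ℝ) (Φ' : H → H) (L s α : ℝ)
    (hΨ_ne_bot : ∀ u, Ψ u ≠ ⊥) (hΨ_proper : ∃ u, Ψ u ≠ ⊤)
    (hΨ_lsc : LowerSemicontinuous Ψ)
    (hΨ_convex : ∀ u v : H, ∀ a b : ℝ, 0 ≤ a → 0 ≤ b → a + b = 1 →
      Ψ (a • u + b • v) ≤ (a : EReal) * Ψ u + (b : EReal) * Ψ v)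
    (hΦ_convex : ConvexOn ℝ Set.univ Φ)
    (hΦ_diff : ∀ u, HasGradientAt Φ (Φ' u) u)
    (hΦ_lip : LipschitzWith (Real.toNNReal L) Φ')
    (hα : 3 ≤ α) (hs : 0 < s) (hsL : s < 1 / L)
    (x y : ℕ → H)
    (hy : ∀ k : ℕ,
      y k = x k + (((k : ℝ) - 1) / ((k : ℝ) + α - 1)) • (x k - x (k - 1)))
    (hx : ∀ k : ℕ, ∀ u : H,
      Ψ (x (k + 1)) + ((1 / (2 * s) * ‖x (k + 1) - (y k - s • Φ' (y k))‖ ^ 2 : ℝ) : EReal)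
        ≤ Ψ u + ((1 / (2 * s) * ‖u - (y k - s • Φ' (y k))‖ ^ 2 : ℝ) : EReal))
    (xstar : H)
    (hxstar : ∀ u, Ψ xstar + (Φ xstar : EReal) ≤ Ψ u + (Φ u : EReal)) :
    Antitone (fun k : ℕ => (((2 * s / (α - 1) * ((k : ℝ) + α - 2) ^ 2 : ℝ) : EReal) * ((Ψ (x k) + (Φ (x k) : EReal)) - (Ψ xstar + (Φ xstar : EReal))) + (((α - 1) * ‖(x k + (((k : ℝ) - 1) / (α - 1)) • (x k - x (k - 1))) - xstar‖ ^ 2 : ℝ) : EReal))) ∧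
      ∃ l : EReal, Tendsto (fun k : ℕ => (((2 * s / (α - 1) * ((k : ℝ) + α - 2) ^ 2 : ℝ) : EReal) * ((Ψ (x k) + (Φ (x k) : EReal)) - (Ψ xstar + (Φ xstar : EReal))) + (((α - 1) * ‖(x k + (((k : ℝ) - 1) / (α - 1)) • (x k - x (k - 1))) - xstar‖ ^ 2 : ℝ) : EReal))) atTop (nhds l) := by
  have hL : 0 < L := by
    by_contra h
    have : 1 / L ≤ 0 := one_div_nonpos.2 (not_lt.1 h)
    linarith
  have hsL' : s * L ≤ 1 := ((lt_div_iff₀ hL).1 hsL).le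
  obtain ⟨u₀, hu₀⟩ := hΨ_proper
  have hstar_top : Ψ xstar ≠ ⊤ := by
    intro h
    have := hxstar u₀
    rw [h, EReal.top_add_coe, top_le_iff] at this
    exact EReal.add_ne_top hu₀ (EReal.coe_ne_top _) this
  obtain ⟨S, hS⟩ : ∃ S : ℝ, Ψ xstar = S :=
    ⟨_, (EReal.coe_toReal hstar_top (hΨ_ne_bot _)).symm⟩
  have hfin : ∀ k, ∃ A : ℝ, Ψ (x (k + 1)) = A := by
    intro k
    refine ⟨_, (EReal.coe_toReal ?_ (hΨ_ne_bot _)).symm⟩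
    intro h
    have := hx k u₀
    rw [h, EReal.top_add_coe, top_le_iff] at this
    exact EReal.add_ne_top hu₀ (EReal.coe_ne_top _) this
  refine (fun h => ⟨h, _, tendsto_atTop_iInf h⟩) ?_
  apply antitone_nat_of_succ_le
  intro k
  obtain ⟨A, hA⟩ := hfin k
  have hk : (0 : ℝ) ≤ k := Nat.cast_nonneg k
  by_cases htop : Ψ (x k) = ⊤
  · have hpos : 0 < 2 * s / (α - 1) * ((k : ℝ) + α - 2) ^ 2 := by
      have : 0 < α - 1 := by linarith
      have : 0 < (k : ℝ) + α - 2 := by linarith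
      positivity
    rw [htop, hS, EReal.top_add_coe, ← EReal.coe_add, EReal.top_sub_coe,
      EReal.coe_mul_top_of_pos hpos, EReal.top_add_coe]
    exact le_top
  obtain ⟨B, hB⟩ : ∃ B : ℝ, Ψ (x k) = B :=
    ⟨_, (EReal.coe_toReal htop (hΨ_ne_bot _)).symm⟩
  have hmin := hxstar (x k)
  rw [hS, hB] at hmin
  have hmin : S + Φ xstar ≤ B + Φ (x k) := by exact_mod_cast hmin
  rw [hA, hB, hS]
  norm_cast
  push_cast
  set t : ℝ := (k : ℝ) + α - 1 with ht
  have ht0 : 0 < t := by linarith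
  have ha0 : 0 < α - 1 := by linarith
  have hab : (k : ℝ) / t + (α - 1) / t = 1 := by
    rw [← add_div, div_eq_one_iff_eq ht0.ne']; linarith
  have hp0 : 0 ≤ (k : ℝ) / t := by positivity
  have hq0 : 0 ≤ (α - 1) / t := by positivity
  set u : H := ((k : ℝ) / t) • x k + ((α - 1) / t) • xstar with hu
  have hΨu : Ψ u ≤ (((k : ℝ) / t * B + (α - 1) / t * S : ℝ) : EReal) := by
    have := hΨ_convex (x k) xstar _ _ hp0 hq0 hab
    rw [hB, hS] at this
    exact_mod_cast this
  have hΦu : Φ u ≤ (k : ℝ) / t * Φ (x k) + (α - 1) / t * Φ xstar :=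
    hΦ_convex.2 (Set.mem_univ _) (Set.mem_univ _) hp0 hq0 hab
  have hfb := fb_aux Ψ Φ Φ' L s hΨ_convex hΦ_convex hΦ_diff hΦ_lip hs hL hsL' (y k) (x (k + 1)) u A _
    (hx k) hA hΨu
  set z : H := x k + (((k : ℝ) - 1) / (α - 1)) • (x k - x (k - 1)) with hz
  set z' : H := x (k + 1) + (((k : ℝ) + 1 - 1) / (α - 1)) • (x (k + 1) - x k) with hz'
  have ht1 : t ≠ 0 := ht0.ne'
  have ha1 : α - 1 ≠ 0 := ha0.ne'
  have ek : (k : ℝ) = t - (α - 1) := by rw [ht]; ring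
  have e1 : u - y k = -(((α - 1) / t) • (z - xstar)) := by
    rw [hu, hy k, hz, ← ht]
    match_scalars <;> field_simp <;> linarith
  have e2 : u - x (k + 1) = -(((α - 1) / t) • (z' - xstar)) := by
    rw [hu, hz']
    match_scalars <;> field_simp <;> linarith
  rw [e1, e2, norm_neg, norm_neg, norm_smul, norm_smul, mul_pow, mul_pow, Real.norm_of_nonneg hq0] at hfb
  have hm := mul_le_mul_of_nonneg_left (add_le_add hfb (mul_le_mul_of_nonneg_left hΦu
    (by linarith : 0 ≤ 2 * s))) (by positivity : 0 ≤ t ^ 2 / (α - 1))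
  have hcoef : (k : ℝ) * t ≤ ((k : ℝ) + α - 2) ^ 2 := by
    rw [ht]; nlinarith
  have hθ := mul_le_mul_of_nonneg_left (mul_le_mul_of_nonneg_right hcoef (sub_nonneg.2 hmin))
    (by positivity : 0 ≤ 2 * s / (α - 1))
  have hgoal : 2 * s / (α - 1) * t ^ 2 * (A + Φ (x (k + 1)) - (S + Φ xstar))
      + (α - 1) * ‖z' - xstar‖ ^ 2 ≤ 2 * s / (α - 1) * ((k : ℝ) * t * (B + Φ (x k) - (S + Φ xstar)))
      + (α - 1) * ‖z - xstar‖ ^ 2 := by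
    rw [← sub_nonneg] at hm ⊢
    refine hm.trans_eq ?_
    rw [ek]
    field_simp
    ring
  have e3 : (k : ℝ) + 1 + α - 2 = t := by rw [ht]; ring
  rw [e3]
  linarith
end

section
/- Let H be a real Hilbert space, Ψ : H → ℝ ∪ {+∞} proper, lower-semicontinuous and convex, and Φ : H → ℝ convex and continuously differentiable with L-Lipschitz continuous gradient. Suppose x* ∈ argmin(Ψ + Φ), and let (x_k) be generated by the accelerated forward-backward algorithm with parameter α ≥ 3 and step size 0 < s < 1/L. Then for every k ≥ 0, Θ(x_k) − Θ(x*) ≤ (α−1)E(0) / (2s(k+α−2)²) and ‖z_k − x*‖² ≤ E(0)/(α−1). -/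
open Filter RealInnerProductSpace

lemma aux_line_deriv {H : Type*} [NormedAddCommGroup H] [InnerProductSpace ℝ H] [CompleteSpace H]
    (Φ : H → ℝ) (Φ' : H → H) (hΦ_diff : ∀ u, HasGradientAt Φ (Φ' u) u) (y d : H) (t : ℝ) :
    HasDerivAt (fun t : ℝ => Φ (y + t • d)) (⟪Φ' (y + t • d), d⟫) t := by
  have h1 : HasDerivAt (fun t : ℝ => y + t • d) d t := by
    simpa using ((hasDerivAt_id t).smul_const d).const_add y
  have h2 := (hΦ_diff (y + t • d)).hasFDerivAt.comp_hasDerivAt t h1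
  simp only [InnerProductSpace.toDual_apply_apply] at h2
  exact h2

lemma aux_descent {H : Type*} [NormedAddCommGroup H] [InnerProductSpace ℝ H] [CompleteSpace H]
    (Φ : H → ℝ) (Φ' : H → H) (hΦ_diff : ∀ u, HasGradientAt Φ (Φ' u) u) (L : ℝ) (hL : 0 ≤ L)
    (hlip : LipschitzWith (Real.toNNReal L) Φ') (y d : H) :
    Φ (y + d) ≤ Φ y + ⟪Φ' y, d⟫ + L / 2 * ‖d‖ ^ 2 := by
  have hd : ∀ t : ℝ, HasDerivAt
      (fun t : ℝ => Φ (y + t • d) - t * ⟪Φ' y, d⟫ - t ^ 2 * (L / 2 * ‖d‖ ^ 2))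
      (⟪Φ' (y + t • d), d⟫ - ⟪Φ' y, d⟫ - 2 * t * (L / 2 * ‖d‖ ^ 2)) t := by
    intro t
    have h1 := aux_line_deriv Φ Φ' hΦ_diff y d t
    have h2 := (hasDerivAt_id t).mul_const (⟪Φ' y, d⟫)
    have h3 := ((hasDerivAt_id t).pow 2).mul_const (L / 2 * ‖d‖ ^ 2)
    refine ((h1.sub h2).sub h3).congr_deriv ?_
    simp
  have hanti : AntitoneOn
      (fun t : ℝ => Φ (y + t • d) - t * ⟪Φ' y, d⟫ - t ^ 2 * (L / 2 * ‖d‖ ^ 2))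
      (Set.Icc 0 1) := by
    apply antitoneOn_of_deriv_nonpos (convex_Icc 0 1)
    · exact fun t _ => (hd t).continuousAt.continuousWithinAt
    · exact fun t _ => (hd t).differentiableAt.differentiableWithinAt
    · intro t ht
      rw [interior_Icc] at ht
      rw [(hd t).deriv, ← inner_sub_left]
      have h1 := real_inner_le_norm (Φ' (y + t • d) - Φ' y) d
      have h2 := hlip.dist_le_mul (y + t • d) y
      rw [dist_eq_norm, dist_eq_norm, Real.coe_toNNReal L hL, add_sub_cancel_left, norm_smul,
        Real.norm_of_nonneg ht.1.le] at h2
      have h3 := mul_le_mul_of_nonneg_right h2 (norm_nonneg d)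
      nlinarith
  have := hanti (Set.left_mem_Icc.2 zero_le_one) (Set.right_mem_Icc.2 zero_le_one) zero_le_one
  simp at this
  linarith

lemma aux_convex {H : Type*} [NormedAddCommGroup H] [InnerProductSpace ℝ H] [CompleteSpace H]
    (Φ : H → ℝ) (Φ' : H → H) (hΦ_diff : ∀ u, HasGradientAt Φ (Φ' u) u)
    (hc : ConvexOn ℝ Set.univ Φ) (y d : H) :
    Φ y + ⟪Φ' y, d⟫ ≤ Φ (y + d) := by
  have h1 := aux_line_deriv Φ Φ' hΦ_diff y d 0
  have hc' : ConvexOn ℝ Set.univ (fun t : ℝ => Φ (y + t • d)) := by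
    refine ⟨convex_univ, ?_⟩
    intro a _ b _ p q hp hq hpq
    have := hc.2 (Set.mem_univ (y + a • d)) (Set.mem_univ (y + b • d)) hp hq hpq
    have e : p • (y + a • d) + q • (y + b • d) = y + (p • a + q • b) • d := by
      have : y = p • y + q • y := by rw [← add_smul, hpq, one_smul]
      conv_rhs => rw [this]
      simp only [smul_eq_mul]
      module
    rw [e] at this
    exact this
  have h2 := hc'.le_slope_of_hasDerivAt (Set.mem_univ 0) (Set.mem_univ 1) zero_lt_one h1
  simp [slope_def_field] at h2
  linarith

/-- The prox inequality, real-valued form. -/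
lemma aux_prox {H : Type*} [NormedAddCommGroup H] [InnerProductSpace ℝ H]
    (A B c : ℝ) (p u v : H)
    (h : ∀ t : ℝ, 0 < t → t < 1 →
      A + c * ‖p - v‖ ^ 2 ≤ (1 - t) * A + t * B + c * ‖(1 - t) • p + t • u - v‖ ^ 2) :
    A + c * ‖p - v‖ ^ 2 + c * ‖u - p‖ ^ 2 ≤ B + c * ‖u - v‖ ^ 2 := by
  have key : ∀ t : ℝ, 0 < t → t < 1 →
      A + c * ‖p - v‖ ^ 2 + c * ‖u - p‖ ^ 2 - t * (c * ‖u - p‖ ^ 2) ≤ B + c * ‖u - v‖ ^ 2 := by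
    intro t h0 h1
    have h2 := h t h0 h1
    have e1 : (1 - t) • p + t • u - v = (p - v) + t • (u - p) := by module
    have e2 : u - v = (p - v) + (u - p) := by abel
    rw [e1, norm_add_sq_real, norm_smul, real_inner_smul_right, Real.norm_of_nonneg h0.le] at h2
    rw [e2, norm_add_sq_real]
    refine le_of_mul_le_mul_left ?_ h0
    linarith
  have ht : Tendsto (fun t : ℝ => A + c * ‖p - v‖ ^ 2 + c * ‖u - p‖ ^ 2 - t * (c * ‖u - p‖ ^ 2))
      (nhdsWithin 0 (Set.Ioi 0)) (nhds (A + c * ‖p - v‖ ^ 2 + c * ‖u - p‖ ^ 2)) := by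
    have : Continuous
      (fun t : ℝ => A + c * ‖p - v‖ ^ 2 + c * ‖u - p‖ ^ 2 - t * (c * ‖u - p‖ ^ 2)) := by fun_prop
    have h := this.tendsto 0
    simp only [zero_mul, sub_zero] at h
    exact h.mono_left nhdsWithin_le_nhds
  refine le_of_tendsto ht ?_
  filter_upwards [Ioo_mem_nhdsGT (zero_lt_one (α := ℝ))] with t ht
  exact key t ht.1 ht.2

/-- One step of the energy decay, on real numbers. -/
lemma aux_step (s α k W W1 N N1 : ℝ) (hs : 0 < s) (hα : 3 ≤ α) (hk : 0 ≤ k) (hW : 0 ≤ W)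
    (h : W1 + 1 / (2 * s) * (((α - 1) / (k + α - 1)) ^ 2 * N1) ≤
      (1 - (α - 1) / (k + α - 1)) * W + 1 / (2 * s) * (((α - 1) / (k + α - 1)) ^ 2 * N)) :
    2 * s / (α - 1) * (k + 1 + α - 2) ^ 2 * W1 + (α - 1) * N1 ≤
      2 * s / (α - 1) * (k + α - 2) ^ 2 * W + (α - 1) * N := by
  have h1 : 0 < α - 1 := by linarith
  have h2 : 0 < k + α - 1 := by linarith
  have hm : 0 ≤ 2 * s / (α - 1) * (k + α - 1) ^ 2 := by positivity
  have h3 := mul_le_mul_of_nonneg_left h hm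
  have e1 : ∀ V M : ℝ, 2 * s / (α - 1) * (k + α - 1) ^ 2 *
      (V + 1 / (2 * s) * (((α - 1) / (k + α - 1)) ^ 2 * M)) =
      2 * s / (α - 1) * (k + α - 1) ^ 2 * V + (α - 1) * M := by
    intro V M
    field_simp
  rw [e1, e1] at h3
  have e2 : 2 * s / (α - 1) * (k + α - 1) ^ 2 * ((1 - (α - 1) / (k + α - 1)) * W) =
      2 * s / (α - 1) * (k * (k + α - 1)) * W := by
    field_simp
    ring
  rw [e2] at h3
  have h4 : k * (k + α - 1) ≤ (k + α - 2) ^ 2 := by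
    nlinarith [mul_nonneg hk (sub_nonneg.2 hα), sq_nonneg (α - 2)]
  have h5 : 2 * s / (α - 1) * (k * (k + α - 1)) * W ≤ 2 * s / (α - 1) * (k + α - 2) ^ 2 * W := by
    gcongr
  have e3 : k + 1 + α - 2 = k + α - 1 := by ring
  rw [e3]
  linarith

/-- Fact 2: `Θ(x_k) - Θ(x*) ≤ (α-1)E(0)/(2s(k+α-2)²)` and `‖z_k - x*‖² ≤ E(0)/(α-1)`. -/
theorem fista_value_and_z_bounds
    {H : Type*} [NormedAddCommGroup H] [InnerProductSpace ℝ H] [CompleteSpace H]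
    (Ψ : H → EReal) (Φ : H → ℝ) (Φ' : H → H) (L s α : ℝ)
    (hΨ_ne_bot : ∀ u, Ψ u ≠ ⊥) (hΨ_proper : ∃ u, Ψ u ≠ ⊤)
    (hΨ_lsc : LowerSemicontinuous Ψ)
    (hΨ_convex : ∀ u v : H, ∀ a b : ℝ, 0 ≤ a → 0 ≤ b → a + b = 1 →
      Ψ (a • u + b • v) ≤ (a : EReal) * Ψ u + (b : EReal) * Ψ v)
    (hΦ_convex : ConvexOn ℝ Set.univ Φ)
    (hΦ_diff : ∀ u, HasGradientAt Φ (Φ' u) u)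
    (hΦ_lip : LipschitzWith (Real.toNNReal L) Φ')
    (hα : 3 ≤ α) (hs : 0 < s) (hsL : s < 1 / L)
    (x y : ℕ → H)
    (hy : ∀ k : ℕ,
      y k = x k + (((k : ℝ) - 1) / ((k : ℝ) + α - 1)) • (x k - x (k - 1)))
    (hx : ∀ k : ℕ, ∀ u : H,
      Ψ (x (k + 1)) + ((1 / (2 * s) * ‖x (k + 1) - (y k - s • Φ' (y k))‖ ^ 2 : ℝ) : EReal)
        ≤ Ψ u + ((1 / (2 * s) * ‖u - (y k - s • Φ' (y k))‖ ^ 2 : ℝ) : EReal))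
    (xstar : H)
    (hxstar : ∀ u, Ψ xstar + (Φ xstar : EReal) ≤ Ψ u + (Φ u : EReal)) :
    ∀ k : ℕ,
      ((Ψ (x k) + (Φ (x k) : EReal)) - (Ψ xstar + (Φ xstar : EReal))) ≤ (((α - 1) / (2 * s * ((k : ℝ) + α - 2) ^ 2) : ℝ) : EReal) * (((2 * s / (α - 1) * ((0 : ℝ) + α - 2) ^ 2 : ℝ) : EReal) * ((Ψ (x 0) + (Φ (x 0) : EReal)) - (Ψ xstar + (Φ xstar : EReal))) + (((α - 1) * ‖(x 0 + (((0 : ℝ) - 1) / (α - 1)) • (x 0 - x (0 - 1))) - xstar‖ ^ 2 : ℝ) : EReal)) ∧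
      ((‖(x k + (((k : ℝ) - 1) / (α - 1)) • (x k - x (k - 1))) - xstar‖ ^ 2 : ℝ) : EReal) ≤ (((2 * s / (α - 1) * ((0 : ℝ) + α - 2) ^ 2 : ℝ) : EReal) * ((Ψ (x 0) + (Φ (x 0) : EReal)) - (Ψ xstar + (Φ xstar : EReal))) + (((α - 1) * ‖(x 0 + (((0 : ℝ) - 1) / (α - 1)) • (x 0 - x (0 - 1))) - xstar‖ ^ 2 : ℝ) : EReal)) / ((α - 1 : ℝ) : EReal) := by
  have hL : 0 < L := by
    have : 0 < 1 / L := hs.trans hsL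
    simpa using this
  have hsL' : L * s ≤ 1 := by
    rw [lt_div_iff₀ hL] at hsL; linarith
  have hLs : L / 2 ≤ 1 / (2 * s) := by
    rw [div_le_div_iff₀ (by norm_num) (by positivity)]; linarith
  have hα1 : 0 < α - 1 := by linarith
  have hα2 : 0 < α - 2 := by linarith
  -- finiteness
  have hstar_top : Ψ xstar ≠ ⊤ := by
    obtain ⟨u, hu⟩ := hΨ_proper
    intro h
    have := hxstar u
    rw [h, EReal.top_add_coe, top_le_iff] at this
    lift Ψ u to ℝ using ⟨hu, hΨ_ne_bot u⟩ with r
    exact EReal.coe_ne_top (r + Φ u) (by rw [EReal.coe_add]; exact this)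
  have hsucc_top : ∀ k, Ψ (x (k + 1)) ≠ ⊤ := by
    intro k h
    have := hx k xstar
    rw [h, EReal.top_add_coe, top_le_iff] at this
    lift Ψ xstar to ℝ using ⟨hstar_top, hΨ_ne_bot xstar⟩ with r
    exact EReal.coe_ne_top _ (by rw [EReal.coe_add]; exact this)
  obtain ⟨ψs, hψs⟩ : ∃ r : ℝ, Ψ xstar = r :=
    ⟨_, (EReal.coe_toReal hstar_top (hΨ_ne_bot xstar)).symm⟩
  by_cases h0 : Ψ (x 0) = ⊤
  · have eT : (((2 * s / (α - 1) * ((0 : ℝ) + α - 2) ^ 2 : ℝ) : EReal) * ((Ψ (x 0) + (Φ (x 0) : EReal)) - (Ψ xstar + (Φ xstar : EReal))) + (((α - 1) * ‖(x 0 + (((0 : ℝ) - 1) / (α - 1)) • (x 0 - x (0 - 1))) - xstar‖ ^ 2 : ℝ) : EReal)) = ⊤ := by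
      rw [h0, hψs, EReal.top_add_coe, ← EReal.coe_add, EReal.top_sub_coe,
        EReal.coe_mul_top_of_pos (by rw [zero_add]; positivity), EReal.top_add_coe]
    intro k
    rw [eT]
    have hk : 0 < (k : ℝ) + α - 2 := by have := Nat.cast_nonneg (α := ℝ) k; linarith
    refine ⟨?_, ?_⟩
    · rw [EReal.coe_mul_top_of_pos (by positivity)]
      exact le_top
    · rw [EReal.top_div_of_pos_ne_top (by exact_mod_cast hα1) (EReal.coe_ne_top _)]
      exact le_top
  have hall_top : ∀ k, Ψ (x k) ≠ ⊤ := by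
    intro k
    cases k with
    | zero => exact h0
    | succ k => exact hsucc_top k
  have hex : ∀ k, ∃ r : ℝ, Ψ (x k) = r := fun k =>
    ⟨_, (EReal.coe_toReal (hall_top k) (hΨ_ne_bot _)).symm⟩
  choose ψ hψ using hex
  set z : ℕ → H := fun k => x k + (((k : ℝ) - 1) / (α - 1)) • (x k - x (k - 1)) with hz
  have hWnn : ∀ k, 0 ≤ (ψ k + Φ (x k)) - (ψs + Φ xstar) := by
    intro k
    have := hxstar (x k)
    rw [hψ, hψs] at this
    have : ψs + Φ xstar ≤ ψ k + Φ (x k) := by exact_mod_cast this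
    linarith
  -- key inequality
  have hkey : ∀ k : ℕ, ∀ u : H, ∀ B : ℝ, Ψ u ≤ (B : EReal) →
      ψ (k + 1) + Φ (x (k + 1)) + 1 / (2 * s) * ‖u - x (k + 1)‖ ^ 2 ≤
        B + Φ u + 1 / (2 * s) * ‖u - y k‖ ^ 2 := by
    intro k u B hB
    have hp := aux_prox (ψ (k + 1)) B (1 / (2 * s)) (x (k + 1)) u
      (y k - s • Φ' (y k)) (by
        intro t ht0 ht1
        have h1 := hx k ((1 - t) • x (k + 1) + t • u)
        have h2 := hΨ_convex (x (k + 1)) u (1 - t) t (by linarith) ht0.le (by ring)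
        have h3 : ((1 - t : ℝ) : EReal) * Ψ (x (k + 1)) + (t : EReal) * Ψ u ≤
            (((1 - t) * ψ (k + 1) + t * B : ℝ) : EReal) := by
          rw [EReal.coe_add, EReal.coe_mul, EReal.coe_mul, hψ]
          gcongr
        have h4 := h1.trans (add_le_add_left (h2.trans h3) _)
        rw [hψ, ← EReal.coe_add, ← EReal.coe_add, EReal.coe_le_coe_iff] at h4
        exact h4)
    have hd := aux_descent Φ Φ' hΦ_diff L hL.le hΦ_lip (y k) (x (k + 1) - y k)
    have hc := aux_convex Φ Φ' hΦ_diff hΦ_convex (y k) (u - y k)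
    rw [add_sub_cancel] at hd hc
    have e : ∀ w : H, 1 / (2 * s) * ‖w - (y k - s • Φ' (y k))‖ ^ 2 =
        1 / (2 * s) * ‖w - y k‖ ^ 2 + ⟪Φ' (y k), w - y k⟫ +
          1 / (2 * s) * ‖s • Φ' (y k)‖ ^ 2 := by
      intro w
      have : w - (y k - s • Φ' (y k)) = (w - y k) + s • Φ' (y k) := by abel
      rw [this, norm_add_sq_real, real_inner_smul_right, real_inner_comm]
      field_simp
    rw [e, e] at hp
    have := mul_le_mul_of_nonneg_right hLs (sq_nonneg ‖x (k + 1) - y k‖)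
    linarith
  have hE : ∀ k : ℕ, 2 * s / (α - 1) * ((k : ℝ) + α - 2) ^ 2 *
        ((ψ k + Φ (x k)) - (ψs + Φ xstar)) + (α - 1) * ‖z k - xstar‖ ^ 2 ≤
      2 * s / (α - 1) * ((0 : ℝ) + α - 2) ^ 2 *
        ((ψ 0 + Φ (x 0)) - (ψs + Φ xstar)) + (α - 1) * ‖z 0 - xstar‖ ^ 2 := by
    intro k
    induction k with
    | zero => simp
    | succ k ih =>
      refine le_trans ?_ ih
      have hk0 : (0 : ℝ) ≤ k := Nat.cast_nonneg k
      have hk1 : 0 < (k : ℝ) + α - 1 := by linarith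
      push_cast
      apply aux_step s α k _ _ _ _ hs hα hk0 (hWnn k)
      set θ : ℝ := (α - 1) / (k + α - 1) with hθ
      have hθ0 : 0 ≤ θ := by positivity
      have hθ1 : θ ≤ 1 := by rw [hθ, div_le_one hk1]; linarith
      have hB : Ψ ((1 - θ) • x k + θ • xstar) ≤ (((1 - θ) * ψ k + θ * ψs : ℝ) : EReal) := by
        have := hΨ_convex (x k) xstar (1 - θ) θ (by linarith) hθ0 (by ring)
        rw [hψ, hψs] at this
        exact_mod_cast this
      have h1 := hkey k _ _ hB
      have h2 : Φ ((1 - θ) • x k + θ • xstar) ≤ (1 - θ) * Φ (x k) + θ * Φ xstar :=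
        hΦ_convex.2 (Set.mem_univ _) (Set.mem_univ _) (by linarith) hθ0 (by ring)
      have e1 : (1 - θ) • x k + θ • xstar - x (k + 1) = (-θ) • (z (k + 1) - xstar) := by
        have : x (k + 1) = (1 - θ) • x k + θ • z (k + 1) := by
          simp only [hz, hθ, Nat.add_sub_cancel]
          push_cast
          match_scalars <;> field_simp <;> ring
        rw [neg_smul, ← smul_neg, neg_sub]
        nth_rewrite 1 [this]
        module
      have e2 : (1 - θ) • x k + θ • xstar - y k = (-θ) • (z k - xstar) := by
        have : y k = (1 - θ) • x k + θ • z k := by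
          rw [hy]
          simp only [hz, hθ]
          match_scalars <;> field_simp <;> ring
        rw [this]
        module
      have e3 : ∀ w : H, ‖(-θ) • w‖ ^ 2 = θ ^ 2 * ‖w‖ ^ 2 := by
        intro w
        rw [norm_smul, mul_pow, Real.norm_eq_abs, sq_abs, neg_sq]
      rw [e1, e2, e3, e3] at h1
      linarith
  intro k
  have hk : 0 < (k : ℝ) + α - 2 := by have := Nat.cast_nonneg (α := ℝ) k; linarith
  have hEk := hE k
  have hz0 : z 0 = x 0 + (((0 : ℝ) - 1) / (α - 1)) • (x 0 - x (0 - 1)) := by simp [hz]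
  rw [hz0] at hEk
  rw [hψ, hψ, hψs]
  have hW := hWnn k
  constructor
  · simp only [← EReal.coe_add, ← EReal.coe_sub, ← EReal.coe_mul, ← EReal.coe_div, EReal.coe_le_coe_iff]
    have : (ψ k + Φ (x k)) - (ψs + Φ xstar) =
        (α - 1) / (2 * s * ((k : ℝ) + α - 2) ^ 2) * (2 * s / (α - 1) * ((k : ℝ) + α - 2) ^ 2 *
        ((ψ k + Φ (x k)) - (ψs + Φ xstar))) := by
      field_simp
    rw [this]
    refine mul_le_mul_of_nonneg_left ?_ (by positivity)
    have : 0 ≤ (α - 1) * ‖z k - xstar‖ ^ 2 := by positivity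
    linarith
  · simp only [← EReal.coe_add, ← EReal.coe_sub, ← EReal.coe_mul, ← EReal.coe_div, EReal.coe_le_coe_iff]
    rw [le_div_iff₀ hα1]
    have : 0 ≤ 2 * s / (α - 1) * ((k : ℝ) + α - 2) ^ 2 *
        ((ψ k + Φ (x k)) - (ψs + Φ xstar)) := by positivity
    have e : z k = x k + (((k : ℝ) - 1) / (α - 1)) • (x k - x (k - 1)) := rfl
    rw [← e]
    linarith
end
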